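/- There exists c > 0 such that for every word w with letters in {1,2,3} whose last two letters are different, and every vector v ∈ ℝ³ with nonnegative coordinates, one has ‖A_w v‖ ≥ c · ‖A_w‖ · ‖v‖, where ‖A_w‖ is the ℓ²-operator norm. -/

import Mathlib

/-!
For a nonnegative matrix `B` and a nonnegative vector `v`, the `ℓ¹` norm of `B v` is `∑ⱼ sⱼ vⱼ`,
where `sⱼ` is the `j`-th column sum of `B`. So `‖B v‖` is comparable to `‖B‖ ‖v‖`, uniformly in
nonnegative `v`, as soon as the column sums of `B` are comparable to each other
(`enorm3_mulVec_ge_of_colSum`).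

The column sums `x` of any product `A_u` satisfy the three triangle inequalities
`xᵢ ≤ xⱼ + xₖ` (`colSum_triangle`): they hold for the identity, and right multiplication by `A_a`
adds `x_a` to the two other coordinates, which preserves them. If `{a, b, c} = {1, 2, 3}`, the
column sums of `A_u A_a A_b` at `a, b, c` are `2 x_a + x_b`, `x_a + x_b` and `2 x_a + x_b + x_c`;
since `x_c ≤ x_a + x_b`, all three lie between `x_a + x_b` and `3 (x_a + x_b)`
(`colSum_comparable`).
-/

open Matrix MeasureTheory

noncomputable section

abbrev M3 := Matrix (Fin 3) (Fin 3) ℝ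
abbrev E3 := EuclideanSpace ℝ (Fin 3)

/-- The Rauzy generators. -/
def A : Fin 3 → M3
  | 0 => !![1,1,1; 0,1,0; 0,0,1]
  | 1 => !![1,0,0; 1,1,1; 0,0,1]
  | 2 => !![1,0,0; 0,1,0; 1,1,1]

/-- Product of the matrices along a word. -/
def Aw (w : List (Fin 3)) : M3 := (w.map A).prod

/-- Euclidean norm of a vector in `ℝ³`. -/
def enorm3 (v : Fin 3 → ℝ) : ℝ := Real.sqrt (v 0 ^ 2 + v 1 ^ 2 + v 2 ^ 2)

/-- Largest singular value = `ℓ²` operator norm. -/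
def sval1 (g : M3) : ℝ := ‖(Matrix.toEuclideanLin g).toContinuousLinearMap‖

/-- Smallest singular value (for invertible `g`): `σ₃(g) = σ₁(g⁻¹)⁻¹`. -/
def sval3 (g : M3) : ℝ := (sval1 g⁻¹)⁻¹

/-- Middle singular value (for invertible `g`): `σ₂ = |det g|·σ₁(g⁻¹)/σ₁(g)`. -/
def sval2 (g : M3) : ℝ := |g.det| * sval1 g⁻¹ / sval1 g

def basis3 (i : Fin 3) : Fin 3 → ℝ := Pi.single i 1

def omega3 (v : Fin 3 → ℝ) : ℝ := v 0 + v 1 + v 2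

def ofE : E3 → (Fin 3 → ℝ) := WithLp.equiv 2 (Fin 3 → ℝ)
def toE : (Fin 3 → ℝ) → E3 := (WithLp.equiv 2 (Fin 3 → ℝ)).symm

/-- The standard 2-simplex in `ℝ³` (with the Euclidean metric). -/
def simplex : Set E3 := {x | (∀ i, 0 ≤ ofE x i) ∧ omega3 (ofE x) = 1}

/-- The projective action of the word `w` on the simplex. -/
def fmap (w : List (Fin 3)) (x : E3) : E3 :=
  toE ((omega3 ((Aw w) *ᵥ ofE x))⁻¹ • ((Aw w) *ᵥ ofE x))

/-- The Rauzy gasket. -/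
def gasket : Set E3 :=
  ⋂ n : ℕ, ⋃ w ∈ {w : List (Fin 3) | w.length = n + 1}, fmap w '' simplex

/-- Falconer's singular value function. -/
def phi (s : ℝ) (g : M3) : ℝ :=
  if s ≤ 1 then (sval2 g / sval1 g) ^ s
  else (sval2 g / sval1 g) * (sval3 g / sval1 g) ^ (s - 1)

/-- The affinity exponent of the Rauzy semigroup. -/
def sA : ℝ :=
  sSup {s : ℝ | s ∈ Set.Ioc (0:ℝ) 2 ∧
    ¬ Summable fun w : {w : List (Fin 3) // w ≠ []} => phi s (Aw w.1)}

/-- A word has its last `k` letters not all the same. -/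
def LastNotAllSame (w : List (Fin 3)) (k : ℕ) : Prop :=
  k ≤ w.length ∧ ¬ ∃ c, ∀ x ∈ w.drop (w.length - k), x = c

/-- A word's last two letters are different. -/
def LastTwoDiff (w : List (Fin 3)) : Prop :=
  ∃ u a b, w = u ++ [a, b] ∧ a ≠ b

/-- The Cartan projection `κ(g) = (log σ₁, log σ₂, log σ₃)`. -/
def kappa (g : M3) : Fin 3 → ℝ :=
  ![Real.log (sval1 g), Real.log (sval2 g), Real.log (sval3 g)]

/-- The linear functional `ψ_s` on the Cartan algebra. -/
def psi (s : ℝ) (lam : Fin 3 → ℝ) : ℝ := (lam 0 - lam 1) + (s - 1) * (lam 0 - lam 2)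

end

/-- The sum of the entries of the `j`-th column of `B`. -/
def colSum (B : M3) (j : Fin 3) : ℝ := B 0 j + B 1 j + B 2 j

lemma Aw_append_singleton (u : List (Fin 3)) (a : Fin 3) : Aw (u ++ [a]) = Aw u * A a := by
  simp [Aw]

lemma A_nonneg (a i j : Fin 3) : 0 ≤ A a i j := by
  fin_cases a <;> fin_cases i <;> fin_cases j <;> simp [A]

lemma Aw_nonneg (u : List (Fin 3)) (i j : Fin 3) : 0 ≤ Aw u i j := by
  induction u using List.reverseRecOn generalizing i j with
  | nil => fin_cases i <;> fin_cases j <;> simp [Aw]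
  | append_singleton u a ih =>
    rw [Aw_append_singleton, Matrix.mul_apply]
    exact Finset.sum_nonneg fun k _ => mul_nonneg (ih i k) (A_nonneg a k j)

lemma colSum_mul_A (B : M3) (a j : Fin 3) :
    colSum (B * A a) j = if j = a then colSum B a else colSum B j + colSum B a := by
  fin_cases a <;> fin_cases j <;>
    simp [colSum, A, Matrix.mul_apply, Fin.sum_univ_three] <;> ring

lemma colSum_nonneg (u : List (Fin 3)) (j : Fin 3) : 0 ≤ colSum (Aw u) j :=
  add_nonneg (add_nonneg (Aw_nonneg u 0 j) (Aw_nonneg u 1 j)) (Aw_nonneg u 2 j)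

lemma colSum_triangle (u : List (Fin 3)) :
    colSum (Aw u) 0 ≤ colSum (Aw u) 1 + colSum (Aw u) 2 ∧
    colSum (Aw u) 1 ≤ colSum (Aw u) 0 + colSum (Aw u) 2 ∧
    colSum (Aw u) 2 ≤ colSum (Aw u) 0 + colSum (Aw u) 1 := by
  induction u using List.reverseRecOn with
  | nil => simp [Aw, colSum]
  | append_singleton u a ih =>
    obtain ⟨h0, h1, h2⟩ := ih
    have p0 := colSum_nonneg u 0
    have p1 := colSum_nonneg u 1
    have p2 := colSum_nonneg u 2
    simp only [Aw_append_singleton, colSum_mul_A]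
    fin_cases a <;> simp <;> refine ⟨?_, ?_, ?_⟩ <;> linarith

lemma colSum_comparable (w : List (Fin 3)) (hw : LastTwoDiff w) (j k : Fin 3) :
    colSum (Aw w) j ≤ 3 * colSum (Aw w) k := by
  obtain ⟨u, a, b, rfl, hab⟩ := hw
  have e : u ++ [a, b] = (u ++ [a]) ++ [b] := by simp
  obtain ⟨h0, h1, h2⟩ := colSum_triangle u
  have p0 := colSum_nonneg u 0
  have p1 := colSum_nonneg u 1
  have p2 := colSum_nonneg u 2
  simp only [e, Aw_append_singleton, colSum_mul_A]
  fin_cases a <;> fin_cases b <;> first | exact absurd rfl hab | skip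
  all_goals fin_cases j <;> fin_cases k <;> simp <;> linarith

lemma enorm3_le_sum (v : Fin 3 → ℝ) : enorm3 v ≤ |v 0| + |v 1| + |v 2| := by
  refine Real.sqrt_le_iff.2 ⟨by positivity, ?_⟩
  rw [← sq_abs (v 0), ← sq_abs (v 1), ← sq_abs (v 2)]
  have h0 := abs_nonneg (v 0)
  have h1 := abs_nonneg (v 1)
  have h2 := abs_nonneg (v 2)
  nlinarith [mul_nonneg h0 h1, mul_nonneg h0 h2, mul_nonneg h1 h2]

lemma sum_le_three_enorm3 (v : Fin 3 → ℝ) : |v 0| + |v 1| + |v 2| ≤ 3 * enorm3 v := by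
  have h0 : |v 0| ≤ enorm3 v := Real.abs_le_sqrt (by nlinarith [sq_nonneg (v 1), sq_nonneg (v 2)])
  have h1 : |v 1| ≤ enorm3 v := Real.abs_le_sqrt (by nlinarith [sq_nonneg (v 0), sq_nonneg (v 2)])
  have h2 : |v 2| ≤ enorm3 v := Real.abs_le_sqrt (by nlinarith [sq_nonneg (v 0), sq_nonneg (v 1)])
  linarith

lemma norm_eq_enorm3 (x : E3) : ‖x‖ = enorm3 x.ofLp := by
  simp [EuclideanSpace.norm_eq, Fin.sum_univ_three, enorm3]

/-- The `ℓ²` operator norm of a nonnegative matrix is at most three times any bound on its column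
sums; the factor `3` comes from comparing the `ℓ¹` and `ℓ²` norms. -/
lemma sval1_le_of_colSum (B : M3) (hB : ∀ i j, 0 ≤ B i j) (M : ℝ)
    (hM : ∀ j, colSum B j ≤ M) : sval1 B ≤ 3 * M := by
  have hM0 : 0 ≤ M :=
    (add_nonneg (add_nonneg (hB 0 0) (hB 1 0)) (hB 2 0)).trans (hM 0)
  refine ContinuousLinearMap.opNorm_le_bound _ (by positivity) fun x => ?_
  have hx : ((Matrix.toEuclideanLin B).toContinuousLinearMap x).ofLp = B *ᵥ x.ofLp := rfl
  rw [norm_eq_enorm3, norm_eq_enorm3, hx]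
  generalize x.ofLp = v
  have row : ∀ i, |(B *ᵥ v) i| ≤ B i 0 * |v 0| + B i 1 * |v 1| + B i 2 * |v 2| := by
    intro i
    have key : ∀ j, |B i j * v j| = B i j * |v j| := fun j => by
      rw [abs_mul, abs_of_nonneg (hB i j)]
    rw [← key, ← key, ← key]
    simpa [Matrix.mulVec, dotProduct, Fin.sum_univ_three] using
      abs_add_three (B i 0 * v 0) (B i 1 * v 1) (B i 2 * v 2)
  have col : ∀ j, colSum B j * |v j| ≤ M * |v j| := fun j =>
    mul_le_mul_of_nonneg_right (hM j) (abs_nonneg _)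
  have c0 := col 0
  have c1 := col 1
  have c2 := col 2
  unfold colSum at c0 c1 c2
  have r0 := row 0
  have r1 := row 1
  have r2 := row 2
  have hs := mul_le_mul_of_nonneg_left (sum_le_three_enorm3 v) hM0
  have he := enorm3_le_sum (B *ᵥ v)
  linarith

lemma enorm3_mulVec_ge_of_colSum (B : M3) (m : ℝ) (hm0 : 0 ≤ m)
    (hm : ∀ j, m ≤ colSum B j) (v : Fin 3 → ℝ) (hv : ∀ i, 0 ≤ v i) :
    m * enorm3 v ≤ 3 * enorm3 (B *ᵥ v) := by
  have col : ∀ j, m * v j ≤ colSum B j * v j := fun j =>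
    mul_le_mul_of_nonneg_right (hm j) (hv j)
  have tot : (B *ᵥ v) 0 + (B *ᵥ v) 1 + (B *ᵥ v) 2
      = colSum B 0 * v 0 + colSum B 1 * v 1 + colSum B 2 * v 2 := by
    simp only [Matrix.mulVec, dotProduct, Fin.sum_univ_three, colSum]
    ring
  have hs := sum_le_three_enorm3 (B *ᵥ v)
  have he := enorm3_le_sum v
  rw [abs_of_nonneg (hv 0), abs_of_nonneg (hv 1), abs_of_nonneg (hv 2)] at he
  have he' := mul_le_mul_of_nonneg_left he hm0
  linarith [col 0, col 1, col 2, le_abs_self ((B *ᵥ v) 0), le_abs_self ((B *ᵥ v) 1),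
    le_abs_self ((B *ᵥ v) 2)]

/-- For words whose last two letters differ, `‖A_w v‖ ≥ c ‖A_w‖ ‖v‖` for every vector `v`
with nonnegative coordinates. -/
theorem norm_image_nonneg_vector_ge :
    ∃ c > (0:ℝ), ∀ w : List (Fin 3), LastTwoDiff w →
      ∀ v : Fin 3 → ℝ, (∀ i, 0 ≤ v i) →
        c * sval1 (Aw w) * enorm3 v ≤ enorm3 (Aw w *ᵥ v) := by
  -- One factor `3` compares column sums; the other two compare `ℓ¹` and `ℓ²` norms.
  refine ⟨1 / 27, by norm_num, fun w hw v hv => ?_⟩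
  obtain ⟨k, hk⟩ := Finite.exists_min (colSum (Aw w))
  have up := sval1_le_of_colSum (Aw w) (Aw_nonneg w) (3 * colSum (Aw w) k)
    fun j => colSum_comparable w hw j k
  have low := enorm3_mulVec_ge_of_colSum (Aw w) (colSum (Aw w) k) (colSum_nonneg w k) hk v hv
  have hv0 : 0 ≤ enorm3 v := Real.sqrt_nonneg _
  have := mul_le_mul_of_nonneg_right up hv0
  linarith
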